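/- arXiv:1503.08478 — 2 statements merged into one kernel-verified Lean document; each statement's English description precedes it below -/
import Mathlib

section
/- If (D,g) satisfies the Codazzi equation, then the pair (D',g) also satisfies the Codazzi equation, i.e. (D'g)_{i;jk} := ∂g_{jk}/∂y^i − Σ_l Γ'^l_{ij} g_{lk} − Σ_l Γ'^l_{ik} g_{jl} satisfies (D'g)_{i;jk} = (D'g)_{j;ik} for all i,j,k at every point of U. -/
/-!
Lowering an index of the dual connection gives
`Σ_m g_{am} Γ'^m_{ik} = ∂_i g_{ak} − Σ_l Γ^l_{ia} g_{lk}` (`sum_mul_dualGamma`). Substituting this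
for both Christoffel terms of `(D'g)_{i;jk}`, and using the symmetry of `g`, yields `D'g = −Dg`
on `U` (`Dg_dualGamma`), so the symmetry of `Dg` in its first two indices passes to `D'g`.
-/

/-- Partial derivative in the `i`-th coordinate direction. -/
noncomputable def pd {q : ℕ} (i : Fin q) (f : (Fin q → ℝ) → ℝ) (y : Fin q → ℝ) : ℝ :=
  fderiv ℝ f y (Pi.single i 1)

/-- Entries `g^{ij}` of the inverse matrix of `g(y)`. -/
noncomputable def ginv {q : ℕ} (g : (Fin q → ℝ) → Fin q → Fin q → ℝ)
    (y : Fin q → ℝ) (i j : Fin q) : ℝ :=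
  (Matrix.of (g y))⁻¹ i j

/-- Christoffel symbols `Γ̂^i_{jk}` of the Levi-Civita connection of `g`. -/
noncomputable def lc {q : ℕ} (g : (Fin q → ℝ) → Fin q → Fin q → ℝ)
    (i j k : Fin q) (y : Fin q → ℝ) : ℝ :=
  (1 / 2) * ∑ s, ginv g y i s *
    (pd k (fun z => g z s j) y + pd j (fun z => g z s k) y - pd s (fun z => g z j k) y)

/-- Christoffel symbols `Γ'^m_{ik} = Σ_j g^{mj}(∂g_{jk}/∂y^i − Σ_l Γ^l_{ij} g_{lk})` of
the dual connection `D'` of `D` with respect to `g`. -/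
noncomputable def dualGamma {q : ℕ} (g : (Fin q → ℝ) → Fin q → Fin q → ℝ)
    (Γ : Fin q → Fin q → Fin q → (Fin q → ℝ) → ℝ) (m i k : Fin q) (y : Fin q → ℝ) : ℝ :=
  ∑ j, ginv g y m j * (pd i (fun z => g z j k) y - ∑ l, Γ l i j y * g y l k)

/-- `(Dg)_{i;jk} = ∂g_{jk}/∂y^i − Σ_l Γ^l_{ij} g_{lk} − Σ_l Γ^l_{ik} g_{jl}`. -/
noncomputable def Dg {q : ℕ} (g : (Fin q → ℝ) → Fin q → Fin q → ℝ)
    (Γ : Fin q → Fin q → Fin q → (Fin q → ℝ) → ℝ) (i j k : Fin q) (y : Fin q → ℝ) : ℝ :=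
  pd i (fun z => g z j k) y - (∑ l, Γ l i j y * g y l k) - ∑ l, Γ l i k y * g y j l

/-- Curvature tensor `R^m_{kij}` of the connection with Christoffel symbols `Γ`,
corresponding to `R(e_i,e_j)e_k = Σ_m R^m_{kij} e_m`. -/
noncomputable def curv {q : ℕ} (Γ : Fin q → Fin q → Fin q → (Fin q → ℝ) → ℝ)
    (m k i j : Fin q) (y : Fin q → ℝ) : ℝ :=
  pd i (Γ m j k) y - pd j (Γ m i k) y +
    ∑ r, (Γ m i r y * Γ r j k y - Γ m j r y * Γ r i k y)

open scoped Matrix in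
/-- Lowering the upper index of `Γ'` cancels the inverse matrix in its definition. -/
lemma sum_mul_dualGamma {q : ℕ} {g : (Fin q → ℝ) → Fin q → Fin q → ℝ}
    {y : Fin q → ℝ} (hy : (Matrix.of (g y)).PosDef)
    (Γ : Fin q → Fin q → Fin q → (Fin q → ℝ) → ℝ) (a i k : Fin q) :
    ∑ m, g y a m * dualGamma g Γ m i k y =
      pd i (fun z => g z a k) y - ∑ l, Γ l i a y * g y l k := by
  have hdet : IsUnit (Matrix.of (g y)).det := (Matrix.isUnit_iff_isUnit_det _).mp hy.isUnit
  let v : Fin q → ℝ := fun j => pd i (fun z => g z j k) y - ∑ l, Γ l i j y * g y l k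
  have h : Matrix.of (g y) *ᵥ ((Matrix.of (g y))⁻¹ *ᵥ v) = v := by
    rw [Matrix.mulVec_mulVec, Matrix.mul_nonsing_inv _ hdet, Matrix.one_mulVec]
  exact congrFun h a

lemma Dg_dualGamma {q : ℕ} {U : Set (Fin q → ℝ)} (hU : IsOpen U)
    {g : (Fin q → ℝ) → Fin q → Fin q → ℝ}
    (hposdef : ∀ y ∈ U, (Matrix.of (g y)).PosDef)
    (Γ : Fin q → Fin q → Fin q → (Fin q → ℝ) → ℝ) {y : Fin q → ℝ} (hy : y ∈ U)
    (i j k : Fin q) :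
    Dg g (dualGamma g Γ) i j k y = -Dg g Γ i j k y := by
  have hsym : ∀ z ∈ U, ∀ a b, g z a b = g z b a := fun z hz a b => by
    simpa using (hposdef z hz).isHermitian.apply b a
  -- `g` is symmetric only on `U`; openness of `U` is what makes its derivatives symmetric at `y`.
  have hpd : pd i (fun z => g z k j) y = pd i (fun z => g z j k) y := by
    have h : (fun z => g z k j) =ᶠ[nhds y] fun z => g z j k := by
      filter_upwards [hU.mem_nhds hy] with z hz using hsym z hz k j
    simp only [pd, h.fderiv_eq]
  have h₁ : ∑ l, dualGamma g Γ l i j y * g y l k =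
      pd i (fun z => g z j k) y - ∑ l, Γ l i k y * g y j l := by
    simp only [hsym y hy j]
    rw [← hpd, ← sum_mul_dualGamma (hposdef y hy)]
    exact Finset.sum_congr rfl fun l _ => by rw [hsym y hy l k, mul_comm]
  have h₂ : ∑ l, dualGamma g Γ l i k y * g y j l =
      pd i (fun z => g z j k) y - ∑ l, Γ l i j y * g y l k := by
    rw [← sum_mul_dualGamma (hposdef y hy)]
    exact Finset.sum_congr rfl fun l _ => mul_comm _ _
  simp only [Dg, h₁, h₂]
  ring

/-- if `(D,g)` satisfies the Codazzi equation, so does `(D',g)`. -/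
theorem dual_codazzi
    {q : ℕ} (U : Set (Fin q → ℝ)) (hU : IsOpen U)
    (g : (Fin q → ℝ) → Fin q → Fin q → ℝ)
    (hg : ∀ i j, ContDiffOn ℝ (⊤ : ℕ∞) (fun y => g y i j) U)
    (hposdef : ∀ y ∈ U, (Matrix.of (g y)).PosDef)
    (Γ : Fin q → Fin q → Fin q → (Fin q → ℝ) → ℝ)
    (hΓ : ∀ k i j, ContDiffOn ℝ (⊤ : ℕ∞) (Γ k i j) U)
    (hΓsym : ∀ y ∈ U, ∀ k i j, Γ k i j y = Γ k j i y)
    (hcodazzi : ∀ y ∈ U, ∀ i j k, Dg g Γ i j k y = Dg g Γ j i k y) :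
    ∀ y ∈ U, ∀ i j k,
      Dg g (dualGamma g Γ) i j k y = Dg g (dualGamma g Γ) j i k y := by
  intro y hy i j k
  rw [Dg_dualGamma hU hposdef Γ hy, Dg_dualGamma hU hposdef Γ hy, hcodazzi y hy]
end

section
/- The connection D' dual to the standard flat connection with respect to the Hessian metric g, whose Christoffel symbols are Γ'^k_{ij} = 2γ^k_{ij} = Σ_s g^{ks} ∂³φ/∂y^s∂y^i∂y^j, is flat: its curvature tensor R'^m_{kij} = ∂Γ'^m_{jk}/∂y^i − ∂Γ'^m_{ik}/∂y^j + Σ_r (Γ'^m_{ir} Γ'^r_{jk} − Γ'^m_{jr} Γ'^r_{ik}) vanishes identically on U. -/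
/-- The Hessian metric `g_{ij} = ∂²φ/∂y^i∂y^j` of the potential `φ`. -/
noncomputable def hess {q : ℕ} (φ : (Fin q → ℝ) → ℝ) (y : Fin q → ℝ) (i j : Fin q) : ℝ :=
  pd i (pd j φ) y

/-- Entries `g^{ij}` of the inverse of the Hessian matrix of `φ`. -/
noncomputable def hessInv {q : ℕ} (φ : (Fin q → ℝ) → ℝ) (y : Fin q → ℝ) (i j : Fin q) : ℝ :=
  (Matrix.of (hess φ y))⁻¹ i j

/-- The difference tensor `γ^i_{jl} = ½ Σ_s g^{is} ∂³φ/∂y^s∂y^j∂y^l` between the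
Levi-Civita connection of the Hessian metric and the standard flat connection. -/
noncomputable def gam {q : ℕ} (φ : (Fin q → ℝ) → ℝ) (i j l : Fin q) (y : Fin q → ℝ) : ℝ :=
  (1 / 2) * ∑ s, hessInv φ y i s * pd s (pd j (pd l φ)) y

/-- The Hessian curvature tensor `Q^i_{jkl} = ∂γ^i_{jl}/∂y^k`. -/
noncomputable def Qup {q : ℕ} (φ : (Fin q → ℝ) → ℝ) (i j k l : Fin q) (y : Fin q → ℝ) : ℝ :=
  pd k (gam φ i j l) y

/-- The lowered Hessian curvature tensor `Q_{ijkl} = Σ_r g_{ir} Q^r_{jkl}`. -/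
noncomputable def Qlow {q : ℕ} (φ : (Fin q → ℝ) → ℝ) (i j k l : Fin q) (y : Fin q → ℝ) : ℝ :=
  ∑ r, hess φ y i r * Qup φ r j k l y

/-- Christoffel symbols `Γ'^k_{ij} = 2γ^k_{ij} = Σ_s g^{ks} ∂³φ/∂y^s∂y^i∂y^j` of the
connection dual to the standard flat connection with respect to the Hessian metric. -/
noncomputable def dualFlat {q : ℕ} (φ : (Fin q → ℝ) → ℝ) (k i j : Fin q)
    (y : Fin q → ℝ) : ℝ :=
  ∑ s, hessInv φ y k s * pd s (pd i (pd j φ)) y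

open scoped Matrix

section Aux

variable {q : ℕ} {U : Set (Fin q → ℝ)}

lemma contDiffOn_pd (hU : IsOpen U) {f : (Fin q → ℝ) → ℝ}
    (hf : ContDiffOn ℝ (⊤ : ℕ∞) f U) (i : Fin q) : ContDiffOn ℝ (⊤ : ℕ∞) (pd i f) U := by
  have h : ContDiffOn ℝ (⊤ : ℕ∞) (fderiv ℝ f) U := hf.fderiv_of_isOpen hU (by simp)
  exact h.clm_apply contDiffOn_const

lemma differentiableAt_of_smooth (hU : IsOpen U) {f : (Fin q → ℝ) → ℝ}
    (hf : ContDiffOn ℝ (⊤ : ℕ∞) f U) {y : Fin q → ℝ} (hy : y ∈ U) : DifferentiableAt ℝ f y :=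
  (hf.contDiffAt (hU.mem_nhds hy)).differentiableAt (by simp)

lemma pd_congr (hU : IsOpen U) {f g : (Fin q → ℝ) → ℝ} (h : Set.EqOn f g U)
    {y : Fin q → ℝ} (hy : y ∈ U) (i : Fin q) : pd i f y = pd i g y := by
  unfold pd
  rw [(h.eventuallyEq_of_mem (hU.mem_nhds hy)).fderiv_eq]

lemma pd_comm (hU : IsOpen U) {f : (Fin q → ℝ) → ℝ}
    (hf : ContDiffOn ℝ (⊤ : ℕ∞) f U) {y : Fin q → ℝ} (hy : y ∈ U) (i j : Fin q) :
    pd i (pd j f) y = pd j (pd i f) y := by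
  have hd : DifferentiableAt ℝ (fderiv ℝ f) y :=
    ((hf.fderiv_of_isOpen (m := 1) hU (by norm_cast)).contDiffAt
      (hU.mem_nhds hy)).differentiableAt (by simp)
  have key : ∀ a b : Fin q, pd a (pd b f) y
      = fderiv ℝ (fderiv ℝ f) y (Pi.single a 1) (Pi.single b 1) := by
    intro a b
    change fderiv ℝ (fun z => fderiv ℝ f z (Pi.single b 1)) y (Pi.single a 1) = _
    rw [fderiv_clm_apply hd (differentiableAt_const _)]
    simp
  have hs : IsSymmSndFDerivAt ℝ f y :=
    (hf.contDiffAt (hU.mem_nhds hy)).isSymmSndFDerivAt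
      (by simpa using WithTop.coe_le_coe.mpr (le_top : (2 : ℕ∞) ≤ ⊤))
  rw [key, key, hs.eq]

lemma pd_sum_mul {f g : Fin q → (Fin q → ℝ) → ℝ} {y : Fin q → ℝ}
    (hf : ∀ s, DifferentiableAt ℝ (f s) y) (hg : ∀ s, DifferentiableAt ℝ (g s) y) (i : Fin q) :
    pd i (fun z => ∑ s, f s z * g s z) y = ∑ s, (pd i (f s) y * g s y + f s y * pd i (g s) y) := by
  unfold pd
  rw [fderiv_fun_sum (fun s _ => (hf s).fun_mul (hg s)), ContinuousLinearMap.sum_apply]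
  refine Finset.sum_congr rfl fun s _ => ?_
  rw [fderiv_fun_mul (hf s) (hg s)]
  simp
  ring

lemma differentiableAt_det {A : (Fin q → ℝ) → Matrix (Fin q) (Fin q) ℝ} {y : Fin q → ℝ}
    (hA : ∀ i j, DifferentiableAt ℝ (fun z => A z i j) y) :
    DifferentiableAt ℝ (fun z => (A z).det) y := by
  simp only [Matrix.det_apply]
  fun_prop

/-- By Cramer's rule, the entries of the inverse of a matrix depending differentiably on a point
are differentiable wherever the matrix is invertible. -/
lemma differentiableAt_inv_entry {A : (Fin q → ℝ) → Matrix (Fin q) (Fin q) ℝ} {y : Fin q → ℝ}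
    (hA : ∀ i j, DifferentiableAt ℝ (fun z => A z i j) y) (h0 : (A y).det ≠ 0) (i j : Fin q) :
    DifferentiableAt ℝ (fun z => (A z)⁻¹ i j) y := by
  have hadj : DifferentiableAt ℝ (fun z => (A z).adjugate i j) y := by
    simp only [Matrix.adjugate_apply]
    refine differentiableAt_det fun a b => ?_
    by_cases h : a = j
    · subst h
      simp
    · simpa [Matrix.updateRow_ne h] using hA a b
  simp only [Matrix.inv_def, Ring.inverse_eq_inv', Matrix.smul_apply, smul_eq_mul]
  exact ((differentiableAt_det hA).inv h0).mul hadj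

variable {φ : (Fin q → ℝ) → ℝ}

lemma differentiableAt_dualFlat (hU : IsOpen U) (hφ : ContDiffOn ℝ (⊤ : ℕ∞) φ U)
    {y : Fin q → ℝ} (hy : y ∈ U) (h0 : (Matrix.of (hess φ y)).det ≠ 0) (k i j : Fin q) :
    DifferentiableAt ℝ (dualFlat φ k i j) y := by
  have hA : ∀ a b, DifferentiableAt ℝ (fun z => Matrix.of (hess φ z) a b) y := fun a b =>
    differentiableAt_of_smooth hU (contDiffOn_pd hU (contDiffOn_pd hU hφ b) a) hy
  have hI : ∀ s, DifferentiableAt ℝ (fun z => hessInv φ z k s) y := fun s =>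
    differentiableAt_inv_entry hA h0 k s
  have h3 : ∀ s, DifferentiableAt ℝ (pd s (pd i (pd j φ))) y := fun s =>
    differentiableAt_of_smooth hU
      (contDiffOn_pd hU (contDiffOn_pd hU (contDiffOn_pd hU hφ j) i) s) hy
  change DifferentiableAt ℝ (fun z => ∑ s, hessInv φ z k s * pd s (pd i (pd j φ)) z) y
  fun_prop

lemma hess_mul_dualFlat {y : Fin q → ℝ} (h0 : (Matrix.of (hess φ y)).det ≠ 0)
    (a j k : Fin q) :
    ∑ m, hess φ y a m * dualFlat φ m j k y = pd a (pd j (pd k φ)) y := by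
  have h := Matrix.mul_nonsing_inv (Matrix.of (hess φ y)) (isUnit_iff_ne_zero.mpr h0)
  have h2 : Matrix.of (hess φ y) *ᵥ
      ((Matrix.of (hess φ y))⁻¹ *ᵥ fun s => pd s (pd j (pd k φ)) y)
        = fun s => pd s (pd j (pd k φ)) y := by
    rw [Matrix.mulVec_mulVec, h, Matrix.one_mulVec]
  exact congrFun h2 a

/-- The derivative of `hess_mul_dualFlat` in direction `i`. -/
lemma hess_mul_half_curv (hU : IsOpen U) (hφ : ContDiffOn ℝ (⊤ : ℕ∞) φ U)
    (h0 : ∀ y ∈ U, (Matrix.of (hess φ y)).det ≠ 0) {y : Fin q → ℝ} (hy : y ∈ U)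
    (a i j k : Fin q) :
    ∑ m, hess φ y a m * (pd i (dualFlat φ m j k) y + ∑ r, dualFlat φ m i r y * dualFlat φ r j k y)
      = pd i (pd a (pd j (pd k φ))) y := by
  have hg : ∀ m, DifferentiableAt ℝ (pd a (pd m φ)) y := fun m =>
    differentiableAt_of_smooth hU (contDiffOn_pd hU (contDiffOn_pd hU hφ m) a) hy
  have hΓ : ∀ m, DifferentiableAt ℝ (dualFlat φ m j k) y := fun m =>
    differentiableAt_dualFlat hU hφ hy (h0 y hy) m j k
  rw [← pd_congr hU (fun z hz => hess_mul_dualFlat (h0 z hz) a j k) hy i]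
  refine Eq.trans ?_ (pd_sum_mul hg hΓ i).symm
  have h3 : ∀ r, pd i (pd a (pd r φ)) y = ∑ m, hess φ y a m * dualFlat φ m i r y := fun r => by
    rw [hess_mul_dualFlat (h0 y hy), pd_comm hU (contDiffOn_pd hU hφ r) hy]
  simp only [h3, mul_add, Finset.sum_add_distrib, Finset.mul_sum, Finset.sum_mul]
  rw [add_comm, Finset.sum_comm]
  simp only [mul_assoc, hess]

end Aux

/-- the connection dual to the standard flat connection with respect to
the Hessian metric is flat: its curvature vanishes identically on `U`. -/
theorem dual_of_flat_is_flat
    {q : ℕ} (U : Set (Fin q → ℝ)) (hU : IsOpen U)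
    (φ : (Fin q → ℝ) → ℝ) (hφ : ContDiffOn ℝ (⊤ : ℕ∞) φ U)
    (hposdef : ∀ y ∈ U, (Matrix.of (hess φ y)).PosDef) :
    ∀ y ∈ U, ∀ m k i j, curv (dualFlat φ) m k i j y = 0 := by
  intro y hy m k i j
  have h0 : ∀ z ∈ U, (Matrix.of (hess φ z)).det ≠ 0 := fun z hz => (hposdef z hz).det_pos.ne'
  have hker : Matrix.of (hess φ y) *ᵥ (fun m => curv (dualFlat φ) m k i j y) = 0 := by
    funext a
    have h1 := hess_mul_half_curv hU hφ h0 hy a i j k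
    have h2 := hess_mul_half_curv hU hφ h0 hy a j i k
    have hsymm : pd i (pd a (pd j (pd k φ))) y = pd j (pd a (pd i (pd k φ))) y := by
      have hk := contDiffOn_pd hU hφ k
      rw [pd_comm hU (contDiffOn_pd hU hk j) hy i a, pd_comm hU (contDiffOn_pd hU hk i) hy j a]
      exact pd_congr hU (fun z hz => pd_comm hU hk hz i j) hy a
    rw [← h1, ← h2, ← sub_eq_zero, ← Finset.sum_sub_distrib] at hsymm
    change ∑ m, hess φ y a m * curv (dualFlat φ) m k i j y = 0
    rw [← hsymm]
    refine Finset.sum_congr rfl fun m _ => ?_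
    simp only [curv, Finset.sum_sub_distrib]
    ring
  exact congrFun (Matrix.eq_zero_of_mulVec_eq_zero (h0 y hy) hker) m
end
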